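/- Let h₁ be a harmonic polynomial on ℝ^p homogeneous of degree k, h₂ a harmonic polynomial on ℝ^q homogeneous of degree l, set κ₊ = k + p/2, κ₋ = l + q/2, let μ ∈ ℕ, and set λ = −κ₊ + κ₋ + 2μ. Then for every ν ∈ ℕ, at every point (x,y) with x ≠ 0 and y ≠ 0 (integer powers of ρ_y possibly negative), (X⁻)^ν ( h₁ h₂ ρ_y^μ ψ_{κ₊} ) = h₁ h₂ · Σ_{i=0}^{ν} C(ν,i) · ( ⟨−λ+ν−1⟩_i · ⟨μ⟩_{ν−i} · ⟨κ₋+μ−1⟩_{ν−i} / (κ₊)_i ) · ρ_x^i ρ_y^{μ−ν+i} ψ_{κ₊+i}, where C(ν,i) is the binomial coefficient, ⟨β⟩_n = β(β−1)⋯(β−n+1) is the falling factorial, and (β)_n = β(β+1)⋯(β+n−1) is the rising factorial. -/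

import Mathlib

noncomputable section

/-- Points `(x, y) ∈ ℝ^p × ℝ^q`. -/
abbrev Pt (p q : ℕ) := (Fin p → ℝ) × (Fin q → ℝ)

/-- The partial derivative `∂_{x_i}` of a function on `ℝ^p × ℝ^q`. -/
def pdx (p q : ℕ) (i : Fin p) (f : Pt p q → ℂ) : Pt p q → ℂ :=
  fun z => fderiv ℝ f z ((Pi.single i 1 : Fin p → ℝ), (0 : Fin q → ℝ))

/-- The partial derivative `∂_{y_j}` of a function on `ℝ^p × ℝ^q`. -/
def pdy (p q : ℕ) (j : Fin q) (f : Pt p q → ℂ) : Pt p q → ℂ :=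
  fun z => fderiv ℝ f z ((0 : Fin p → ℝ), (Pi.single j 1 : Fin q → ℝ))

/-- `ρ_x = r_x²/2 = (Σ_i x_i²)/2`. -/
def rhox (p q : ℕ) (z : Pt p q) : ℝ := (∑ i, z.1 i ^ 2) / 2

/-- `ρ_y = r_y²/2 = (Σ_j y_j²)/2`. -/
def rhoy (p q : ℕ) (z : Pt p q) : ℝ := (∑ j, z.2 j ^ 2) / 2

/-- The operator `H = −E_x − p/2 + E_y + q/2`. -/
def HOp (p q : ℕ) (f : Pt p q → ℂ) : Pt p q → ℂ := fun z =>
  -(∑ i, ((z.1 i : ℝ) : ℂ) * pdx p q i f z) - ((p : ℂ) / 2) * f z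
    + (∑ j, ((z.2 j : ℝ) : ℂ) * pdy p q j f z) + ((q : ℂ) / 2) * f z

/-- The operator `X⁺ = −(1/2)(Δ_x + r_y²)`. -/
def XpOp (p q : ℕ) (f : Pt p q → ℂ) : Pt p q → ℂ := fun z =>
  -(1 / 2 : ℂ) * ((∑ i, pdx p q i (pdx p q i f) z) + (((∑ j, z.2 j ^ 2 : ℝ)) : ℂ) * f z)

/-- The operator `X⁻ = (1/2)(r_x² + Δ_y)`. -/
def XmOp (p q : ℕ) (f : Pt p q → ℂ) : Pt p q → ℂ := fun z =>
  (1 / 2 : ℂ) * ((((∑ i, z.1 i ^ 2 : ℝ)) : ℂ) * f z + ∑ j, pdy p q j (pdy p q j f) z)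

/-- Rising factorial `(α)ₙ = α(α+1)⋯(α+n−1)` for a complex number `α`. -/
def rising (α : ℂ) : ℕ → ℂ
  | 0 => 1
  | n + 1 => rising α n * (α + n)

/-- Falling factorial `⟨β⟩ₙ = β(β−1)⋯(β−n+1)` for a complex number `β`. -/
def falling (β : ℂ) : ℕ → ℂ
  | 0 => 1
  | n + 1 => falling β n * (β - n)

/-- `Ψ_α(u) = Σ_{n=0}^∞ ((−1)ⁿ/(n!·(α)ₙ))·uⁿ`. -/
def Psi (α : ℂ) (u : ℂ) : ℂ :=
  ∑' n : ℕ, ((-1) ^ n / ((n.factorial : ℂ) * rising α n)) * u ^ n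

/-- `ψ_α(x,y) = Ψ_α(ρ_x ρ_y)`. -/
def psiF (p q : ℕ) (α : ℂ) (z : Pt p q) : ℂ :=
  Psi α (((rhox p q z * rhoy p q z : ℝ)) : ℂ)

end

/-!
On a product `h₂ · G`, with `h₂` harmonic and homogeneous of degree `l` and `G` a function of `x`
and `t = ρ_y`, the operator `X⁻` acts only on `G`, as the ordinary differential operator
`ρ_x + κ₋ ∂_t + t ∂_t²` with `κ₋ = l + q/2`: the Laplacian of `h₂` vanishes and Euler's identity
evaluates the cross term. On `G = φ(x) ρ_x^i ρ_y^s ψ_α`, the rule `Ψ_α' = -Ψ_{α+1} / α` and the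
contiguous relation `Ψ_α = Ψ_{α+1} - u Ψ_{α+2} / (α (α+1))` turn this into
`s (s - 1 + κ₋) φ ρ_x^i ρ_y^(s-1) ψ_α + ((α - 2s - κ₋) / α) φ ρ_x^(i+1) ρ_y^s ψ_{α+1}`.
Iterating `ν` times, the claimed coefficients satisfy the resulting two-term recurrence in `ν`.
-/

open Filter Topology

section Factorials

theorem rising_succ_left (α : ℂ) (n : ℕ) : rising α (n + 1) = α * rising (α + 1) n := by
  induction n with
  | zero => simp [rising]
  | succ n ih =>
    rw [rising, ih, rising]
    push_cast
    ring

theorem falling_succ_left (β : ℂ) (n : ℕ) : falling β (n + 1) = β * falling (β - 1) n := by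
  induction n with
  | zero => simp [falling]
  | succ n ih =>
    rw [falling, ih, falling]
    push_cast
    ring

theorem rising_ne_zero {α : ℂ} (hα : ∀ n : ℕ, α ≠ -n) (n : ℕ) : rising α n ≠ 0 := by
  induction n with
  | zero => simp [rising]
  | succ n ih => exact mul_ne_zero ih fun h => hα n (eq_neg_of_add_eq_zero_left h)

end Factorials

section Psi

/-- The `n`-th Taylor coefficient `(-1)ⁿ / (n! (α)ₙ)` of `Psi α` at the origin. -/
noncomputable def psiCoeff (α : ℂ) (n : ℕ) : ℂ := (-1) ^ n / ((n.factorial : ℂ) * rising α n)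

theorem psiCoeff_zero (α : ℂ) : psiCoeff α 0 = 1 := by simp [psiCoeff, rising]

theorem psiCoeff_succ (α : ℂ) (n : ℕ) :
    psiCoeff α (n + 1) = -(((n : ℂ) + 1)⁻¹ * (α + n)⁻¹) * psiCoeff α n := by
  simp only [psiCoeff, rising, Nat.factorial_succ, Nat.cast_mul, Nat.cast_add_one, div_eq_mul_inv,
    mul_inv, pow_succ]
  ring

theorem psiCoeff_succ_mul (α : ℂ) (n : ℕ) :
    psiCoeff α (n + 1) * ((n : ℂ) + 1) = -α⁻¹ * psiCoeff (α + 1) n := by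
  have hn : (n : ℂ) + 1 ≠ 0 := n.cast_add_one_ne_zero
  simp only [psiCoeff, rising_succ_left, Nat.factorial_succ, div_eq_mul_inv, mul_inv, pow_succ]
  push_cast
  field_simp

theorem psiCoeff_succ_sub {α : ℂ} (hα : ∀ n : ℕ, α ≠ -n) (n : ℕ) :
    psiCoeff α (n + 1) - psiCoeff (α + 1) (n + 1) =
      -(psiCoeff (α + 1 + 1) n / (α * (α + 1))) := by
  have hn : (n : ℂ) + 1 ≠ 0 := n.cast_add_one_ne_zero
  have hfact : (n.factorial : ℂ) ≠ 0 := by exact_mod_cast n.factorial_ne_zero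
  have hleft : rising α (n + 2) = α * (α + 1) * rising (α + 1 + 1) n := by
    rw [rising_succ_left, rising_succ_left, mul_assoc]
  have hright : rising α (n + 2) = rising α (n + 1) * (α + n + 1) := by
    rw [rising]
    push_cast
    ring
  have hmid : rising α (n + 2) = α * rising (α + 1) (n + 1) := rising_succ_left α (n + 1)
  have hne : rising α (n + 2) ≠ 0 := rising_ne_zero hα (n + 2)
  have hpsi : psiCoeff α (n + 1) =
      (-1) ^ (n + 1) * (α + n + 1) / ((n + 1).factorial * rising α (n + 2)) := by
    rw [psiCoeff, hright]
    rw [hright] at hne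
    field_simp [right_ne_zero_of_mul hne]
  have hpsi' : psiCoeff (α + 1) (n + 1) =
      (-1) ^ (n + 1) * α / ((n + 1).factorial * rising α (n + 2)) := by
    rw [psiCoeff, hmid]
    rw [hmid] at hne
    field_simp [left_ne_zero_of_mul hne]
  have hpsi'' : psiCoeff (α + 1 + 1) n / (α * (α + 1)) =
      (-1) ^ n / (n.factorial * rising α (n + 2)) := by
    rw [psiCoeff, hleft, div_div]
    ring
  rw [hpsi, hpsi', hpsi'', Nat.factorial_succ]
  push_cast
  field_simp
  ring

theorem tendsto_inv_natCast_add_one_mul_inv_add_natCast (α : ℂ) :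
    Tendsto (fun n : ℕ => ((n : ℂ) + 1)⁻¹ * (α + n)⁻¹) atTop (𝓝 0) := by
  have hinv (c : ℂ) : Tendsto (fun n : ℕ => (c + n)⁻¹) atTop (𝓝 0) :=
    tendsto_inv₀_cobounded.comp <|
      (tendsto_const_add_cobounded c).comp tendsto_natCast_atTop_cobounded
  simpa [add_comm] using (hinv 1).mul (hinv α)

theorem summable_psiCoeff_mul_pow (α u : ℂ) : Summable fun n => psiCoeff α n * u ^ n := by
  have hratio : ∀ᶠ n : ℕ in atTop, ‖u * (((n : ℂ) + 1)⁻¹ * (α + n)⁻¹)‖ < 1 / 2 := by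
    have := ((tendsto_inv_natCast_add_one_mul_inv_add_natCast α).const_mul u).norm
    rw [mul_zero, norm_zero] at this
    exact this.eventually_lt_const (by norm_num)
  refine summable_of_ratio_norm_eventually_le (r := 1 / 2) (by norm_num) ?_
  filter_upwards [hratio] with n hn
  calc ‖psiCoeff α (n + 1) * u ^ (n + 1)‖
      = ‖u * (((n : ℂ) + 1)⁻¹ * (α + n)⁻¹)‖ * ‖psiCoeff α n * u ^ n‖ := by
        rw [psiCoeff_succ, ← norm_mul, ← norm_neg]
        congr 1
        ring
    _ ≤ 1 / 2 * ‖psiCoeff α n * u ^ n‖ := by gcongr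

theorem Psi_eq_one_add (α u : ℂ) : Psi α u = 1 + ∑' n, psiCoeff α (n + 1) * u ^ (n + 1) := by
  rw [← psiCoeff_zero α, ← mul_one (psiCoeff α 0), ← pow_zero u]
  exact (summable_psiCoeff_mul_pow α u).tsum_eq_zero_add

theorem hasDerivAt_Psi (α u : ℂ) : HasDerivAt (Psi α) (-α⁻¹ * Psi (α + 1) u) u := by
  let R : ℝ := ‖u‖ + 1
  have hterm (n : ℕ) (v : ℂ) : HasDerivAt (fun v => psiCoeff α (n + 1) * v ^ (n + 1))
      (-α⁻¹ * (psiCoeff (α + 1) n * v ^ n)) v := by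
    refine ((hasDerivAt_pow (n + 1) v).const_mul (psiCoeff α (n + 1))).congr_deriv ?_
    rw [← mul_assoc, ← mul_assoc, ← psiCoeff_succ_mul, Nat.add_sub_cancel, Nat.cast_add_one]
  have hbound (n : ℕ) (v : ℂ) (hv : v ∈ Metric.ball (0 : ℂ) R) :
      ‖-α⁻¹ * (psiCoeff (α + 1) n * v ^ n)‖ ≤ ‖-α⁻¹ * (psiCoeff (α + 1) n * (R : ℂ) ^ n)‖ := by
    have hvR : ‖v‖ ≤ ‖(R : ℂ)‖ := by
      rw [Complex.norm_real]
      exact (mem_ball_zero_iff.1 hv).le.trans (le_abs_self R)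
    simp only [norm_mul, norm_pow]
    gcongr
  have hu : u ∈ Metric.ball (0 : ℂ) R := by simp [R]
  have hderiv := hasDerivAt_tsum_of_isPreconnected
    ((summable_psiCoeff_mul_pow (α + 1) R).mul_left (-α⁻¹)).norm Metric.isOpen_ball
    (convex_ball 0 R).isPreconnected (fun n v _ => hterm n v) hbound hu
    ((summable_nat_add_iff 1).2 (summable_psiCoeff_mul_pow α u)) hu
  rw [tsum_mul_left] at hderiv
  exact (hderiv.const_add 1).congr_of_eventuallyEq (.of_forall (Psi_eq_one_add α))

theorem Psi_contiguous {α : ℂ} (hα : ∀ n : ℕ, α ≠ -n) (u : ℂ) :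
    Psi α u = Psi (α + 1) u - u / (α * (α + 1)) * Psi (α + 1 + 1) u := by
  have hshift (β : ℂ) : Summable fun n => psiCoeff β (n + 1) * u ^ (n + 1) :=
    (summable_nat_add_iff 1).2 (summable_psiCoeff_mul_pow β u)
  have hcoeff (n : ℕ) :
      psiCoeff α (n + 1) * u ^ (n + 1) - psiCoeff (α + 1) (n + 1) * u ^ (n + 1) =
        -(u / (α * (α + 1))) * (psiCoeff (α + 1 + 1) n * u ^ n) := by
    rw [← sub_mul, psiCoeff_succ_sub hα]
    ring
  have hsub : Psi α u - Psi (α + 1) u = -(u / (α * (α + 1))) * Psi (α + 1 + 1) u := by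
    rw [Psi_eq_one_add α, Psi_eq_one_add (α + 1), add_sub_add_left_eq_sub,
      ← (hshift α).tsum_sub (hshift (α + 1)), tsum_congr hcoeff, tsum_mul_left]
    rfl
  linear_combination hsub

end Psi

section PartialDerivatives

variable {p q : ℕ} {j : Fin q} {F G : Pt p q → ℂ} {z : Pt p q}

theorem pdy_add (hF : DifferentiableAt ℝ F z) (hG : DifferentiableAt ℝ G z) :
    pdy p q j (F + G) z = pdy p q j F z + pdy p q j G z := by
  simp [pdy, fderiv_add hF hG]

theorem pdy_mul (hF : DifferentiableAt ℝ F z) (hG : DifferentiableAt ℝ G z) :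
    pdy p q j (F * G) z = pdy p q j F z * G z + F z * pdy p q j G z := by
  simp only [pdy, fderiv_mul hF hG, add_apply, smul_apply, smul_eq_mul]
  ring

theorem isOpen_snd_ne_zero : IsOpen {z : Pt p q | z.2 ≠ 0} :=
  isOpen_ne_fun continuous_snd continuous_const

theorem pdy_congr (h : Set.EqOn F G {z | z.2 ≠ 0}) :
    Set.EqOn (pdy p q j F) (pdy p q j G) {z | z.2 ≠ 0} := fun z hz => by
  have hFG : F =ᶠ[𝓝 z] G := h.eventuallyEq_of_mem (isOpen_snd_ne_zero.mem_nhds hz)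
  simp only [pdy, hFG.fderiv_eq]

theorem XmOp_congr (h : Set.EqOn F G {z | z.2 ≠ 0}) :
    Set.EqOn (XmOp p q F) (XmOp p q G) {z | z.2 ≠ 0} := fun z hz => by
  simp only [XmOp, h hz, pdy_congr (pdy_congr h) hz]

/-- A real polynomial in `y`, regarded as the complex-valued function `(x, y) ↦ h(y)`. -/
noncomputable def evalSnd (p : ℕ) {q : ℕ} (h : MvPolynomial (Fin q) ℝ) (z : Pt p q) : ℂ :=
  (MvPolynomial.eval z.2 h : ℝ)

theorem differentiable_ofReal_eval {σ : Type*} [Finite σ] (h : MvPolynomial σ ℝ) :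
    Differentiable ℝ fun x : σ → ℝ => ((MvPolynomial.eval x h : ℝ) : ℂ) :=
  have := Fintype.ofFinite σ
  Complex.ofRealCLM.differentiable.comp fun x =>
    (AnalyticOnNhd.eval_mvPolynomial h x (Set.mem_univ x)).differentiableAt

theorem differentiable_evalSnd (h : MvPolynomial (Fin q) ℝ) : Differentiable ℝ (evalSnd p h) :=
  (differentiable_ofReal_eval h).comp differentiable_snd

theorem pdy_evalSnd_X (i j : Fin q) (z : Pt p q) :
    pdy p q j (evalSnd p (MvPolynomial.X i)) z = (Pi.single j 1 : Fin q → ℂ) i := by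
  let coord : Pt p q →L[ℝ] ℂ := Complex.ofRealCLM.comp
    ((ContinuousLinearMap.proj i).comp (ContinuousLinearMap.snd ℝ (Fin p → ℝ) (Fin q → ℝ)))
  have hcoord : evalSnd p (MvPolynomial.X i) = coord := by
    ext z
    simp [evalSnd, coord]
  rw [hcoord, pdy, coord.fderiv]
  simp [coord, Pi.single_apply, apply_ite]

theorem pdy_evalSnd (h : MvPolynomial (Fin q) ℝ) (j : Fin q) :
    pdy p q j (evalSnd p h) = evalSnd p (MvPolynomial.pderiv j h) := by
  funext z
  induction h using MvPolynomial.induction_on with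
  | C a =>
    have hconst : evalSnd p (.C a : MvPolynomial (Fin q) ℝ) = fun _ => (a : ℂ) := by
      ext w
      simp [evalSnd]
    simp [pdy, hconst, evalSnd]
  | add f g hf hg =>
    have hadd (f g : MvPolynomial (Fin q) ℝ) : evalSnd p (f + g) = evalSnd p f + evalSnd p g := by
      ext w
      simp [evalSnd]
    rw [hadd, pdy_add (differentiable_evalSnd f z) (differentiable_evalSnd g z), hf, hg, map_add,
      hadd, Pi.add_apply]
  | mul_X f i hf =>
    have hmul : evalSnd p (f * .X i) = evalSnd p f * evalSnd p (.X i) := by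
      ext w
      simp [evalSnd]
    rw [hmul, pdy_mul (differentiable_evalSnd f z) (differentiable_evalSnd _ z), hf, pdy_evalSnd_X]
    by_cases hij : i = j
    · subst hij
      simp [evalSnd, add_comm, mul_comm]
    · simp [evalSnd, MvPolynomial.pderiv_X_of_ne hij, Pi.single_eq_of_ne hij, mul_comm]

end PartialDerivatives

section RadialDerivative

variable {p q : ℕ} {F F' G G' : Pt p q → ℂ}

/-- `G'` is the derivative of `G` with respect to `ρ_y` on `y ≠ 0`, for a function `G` that depends
on `y` only through `ρ_y`. As `∂_{y_j} ρ_y = y_j`, this is encoded as `∂_{y_j} G = y_j G'`. -/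
def HasRadialDeriv (G G' : Pt p q → ℂ) : Prop :=
  ∀ z : Pt p q, z.2 ≠ 0 → DifferentiableAt ℝ G z ∧ ∀ j, pdy p q j G z = (z.2 j : ℂ) * G' z

namespace HasRadialDeriv

theorem congr_right (hF : HasRadialDeriv F F') (h : Set.EqOn F' G' {z | z.2 ≠ 0}) :
    HasRadialDeriv F G' := fun z hz => ⟨(hF z hz).1, fun j => h hz ▸ (hF z hz).2 j⟩

theorem add (hF : HasRadialDeriv F F') (hG : HasRadialDeriv G G') :
    HasRadialDeriv (F + G) (F' + G') := fun z hz => by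
  obtain ⟨hFd, hFj⟩ := hF z hz
  obtain ⟨hGd, hGj⟩ := hG z hz
  refine ⟨hFd.add hGd, fun j => ?_⟩
  rw [pdy_add hFd hGd, hFj, hGj, Pi.add_apply, mul_add]

theorem mul (hF : HasRadialDeriv F F') (hG : HasRadialDeriv G G') :
    HasRadialDeriv (F * G) (F' * G + F * G') := fun z hz => by
  obtain ⟨hFd, hFj⟩ := hF z hz
  obtain ⟨hGd, hGj⟩ := hG z hz
  refine ⟨hFd.mul hGd, fun j => ?_⟩
  rw [pdy_mul hFd hGd, hFj, hGj]
  simp only [Pi.add_apply, Pi.mul_apply]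
  ring

theorem comp_fst {φ : (Fin p → ℝ) → ℂ} (hφ : Differentiable ℝ φ) :
    HasRadialDeriv (fun z : Pt p q => φ z.1) 0 := fun z _ => by
  have hd : HasFDerivAt (fun z : Pt p q => φ z.1)
      ((fderiv ℝ φ z.1).comp (.fst ℝ (Fin p → ℝ) (Fin q → ℝ))) z :=
    (hφ z.1).hasFDerivAt.comp z hasFDerivAt_fst
  exact ⟨hd.differentiableAt, fun j => by simp [pdy, hd.fderiv]⟩

theorem const_smul (c : ℂ) (hG : HasRadialDeriv G G') : HasRadialDeriv (c • G) (c • G') := by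
  have hmul := (comp_fst (q := q) (differentiable_const (E := Fin p → ℝ) c)).mul hG
  rwa [zero_mul, zero_add] at hmul

theorem sum_const_smul {ι : Type*} (s : Finset ι) (c : ι → ℂ) {G G' : ι → Pt p q → ℂ}
    (hG : ∀ i ∈ s, HasRadialDeriv (G i) (G' i)) :
    HasRadialDeriv (∑ i ∈ s, c i • G i) (∑ i ∈ s, c i • G' i) := by
  classical
  induction s using Finset.induction_on with
  | empty => exact comp_fst (differentiable_const 0)
  | insert a s ha ih =>
    rw [Finset.sum_insert ha, Finset.sum_insert ha]
    exact ((hG a (s.mem_insert_self a)).const_smul (c a)).add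
      (ih fun i hi => hG i (Finset.mem_insert_of_mem hi))

theorem comp {f f' : ℂ → ℂ} (hG : HasRadialDeriv G G')
    (hf : ∀ z : Pt p q, z.2 ≠ 0 → HasDerivAt f (f' (G z)) (G z)) :
    HasRadialDeriv (f ∘ G) (f' ∘ G * G') := fun z hz => by
  obtain ⟨hGd, hGj⟩ := hG z hz
  have hd : HasFDerivAt (f ∘ G) (f' (G z) • fderiv ℝ G z) z :=
    (hf z hz).comp_hasFDerivAt z hGd.hasFDerivAt
  refine ⟨hd.differentiableAt, fun j => ?_⟩
  calc pdy p q j (f ∘ G) z = f' (G z) * pdy p q j G z := by simp [pdy, hd.fderiv]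
    _ = z.2 j * (f' ∘ G * G') z := by
      rw [hGj, Pi.mul_apply, Function.comp_apply]
      ring

end HasRadialDeriv

theorem rhoy_ne_zero {z : Pt p q} (hz : z.2 ≠ 0) : (rhoy p q z : ℂ) ≠ 0 := by
  rw [Complex.ofReal_ne_zero, rhoy]
  refine div_ne_zero (fun hsum => hz ?_) two_ne_zero
  rw [Finset.sum_eq_zero_iff_of_nonneg fun j _ => sq_nonneg (z.2 j)] at hsum
  exact funext fun j => pow_eq_zero_iff two_ne_zero |>.1 (hsum j (Finset.mem_univ j))

theorem hasRadialDeriv_rhox_pow (i : ℕ) :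
    HasRadialDeriv (fun z : Pt p q => (rhox p q z : ℂ) ^ i) 0 := by
  have hρ : Differentiable ℝ fun x : Fin p → ℝ => (∑ m, x m ^ 2) / 2 := by fun_prop
  exact .comp_fst (φ := fun x => (((∑ m, x m ^ 2) / 2 : ℝ) : ℂ) ^ i)
    ((Complex.ofRealCLM.differentiable.comp hρ).pow i)

theorem hasRadialDeriv_rhoy : HasRadialDeriv (fun z : Pt p q => (rhoy p q z : ℂ)) 1 := by
  let P : MvPolynomial (Fin q) ℝ := .C (1 / 2) * ∑ j, .X j ^ 2
  have hρ : (fun z : Pt p q => (rhoy p q z : ℂ)) = evalSnd p P := by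
    ext z
    simp only [rhoy, evalSnd, P, map_mul, map_sum, map_pow, MvPolynomial.eval_C,
      MvPolynomial.eval_X]
    congr 1
    ring
  have hP (j : Fin q) : MvPolynomial.pderiv j P = .X j := by
    have hC : (MvPolynomial.C (1 / 2 : ℝ) : MvPolynomial (Fin q) ℝ) * 2 = 1 := by
      rw [← map_ofNat (MvPolynomial.C (σ := Fin q) (R := ℝ)) 2, ← map_mul]
      norm_num
    have hsum : MvPolynomial.pderiv j (∑ m, .X m ^ 2 : MvPolynomial (Fin q) ℝ) = 2 * .X j := by
      simp [MvPolynomial.pderiv_X, Pi.single_apply]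
    rw [MvPolynomial.pderiv_C_mul, hsum, ← mul_assoc, hC, one_mul]
  rw [hρ]
  exact fun z _ => ⟨differentiable_evalSnd P z, fun j => by simp [pdy_evalSnd, hP, evalSnd]⟩

theorem hasRadialDeriv_rhoy_zpow (s : ℤ) :
    HasRadialDeriv (fun z : Pt p q => (rhoy p q z : ℂ) ^ s)
      (fun z => s * (rhoy p q z : ℂ) ^ (s - 1)) := by
  have hcomp := hasRadialDeriv_rhoy (p := p) (q := q) |>.comp (f := fun w => w ^ s)
    (f' := fun w => s * w ^ (s - 1)) fun z hz => hasDerivAt_zpow s _ (.inl (rhoy_ne_zero hz))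
  rwa [mul_one] at hcomp

theorem hasRadialDeriv_psiF (α : ℂ) :
    HasRadialDeriv (psiF p q α) (fun z => -α⁻¹ * (rhox p q z : ℂ) * psiF p q (α + 1) z) := by
  have hprod := (hasRadialDeriv_rhox_pow (p := p) (q := q) 1).mul hasRadialDeriv_rhoy
  have hcomp := hprod.comp (f' := fun u => -α⁻¹ * Psi (α + 1) u) fun z _ => hasDerivAt_Psi α _
  have hψ (β : ℂ) : psiF p q β =
      Psi β ∘ ((fun z : Pt p q => (rhox p q z : ℂ) ^ 1) * fun z => (rhoy p q z : ℂ)) := by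
    ext z
    simp [psiF]
  rw [← hψ] at hcomp
  refine hcomp.congr_right fun z _ => ?_
  simp only [hψ, Function.comp_apply, Pi.mul_apply, Pi.add_apply, Pi.zero_apply, Pi.one_apply]
  ring

end RadialDerivative

section RadialPart

variable {p q : ℕ} {G G' L : Pt p q → ℂ}

/-- On `y ≠ 0`, the operator `ρ_x + κ ∂_t + t ∂_t²`, with `t = ρ_y`, maps `G` to `L`. For
`κ = l + q/2` this is what `X⁻` does to `G` in a product of `G` with a harmonic polynomial in `y`
homogeneous of degree `l`. -/
def HasXmRadialPart (κ : ℂ) (G L : Pt p q → ℂ) : Prop :=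
  ∃ G' G'' : Pt p q → ℂ, HasRadialDeriv G G' ∧ HasRadialDeriv G' G'' ∧
    ∀ z : Pt p q, z.2 ≠ 0 → L z = rhox p q z * G z + κ * G' z + rhoy p q z * G'' z

theorem HasXmRadialPart.sum_const_smul {κ : ℂ} {ι : Type*} (s : Finset ι) (c : ι → ℂ)
    {G L : ι → Pt p q → ℂ} (hG : ∀ i ∈ s, HasXmRadialPart κ (G i) (L i)) :
    HasXmRadialPart κ (∑ i ∈ s, c i • G i) (∑ i ∈ s, c i • L i) := by
  choose! G' G'' hG' hG'' hL using hG
  refine ⟨_, _, .sum_const_smul s c hG', .sum_const_smul s c hG'', fun z hz => ?_⟩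
  simp only [Finset.sum_apply, Pi.smul_apply, smul_eq_mul, Finset.mul_sum,
    ← Finset.sum_add_distrib]
  refine Finset.sum_congr rfl fun i hi => ?_
  rw [hL i hi z hz]
  ring

theorem differentiableAt_evalSnd_mul (h : MvPolynomial (Fin q) ℝ) (hG : HasRadialDeriv G G')
    {z : Pt p q} (hz : z.2 ≠ 0) : DifferentiableAt ℝ (evalSnd p h * G) z :=
  (differentiable_evalSnd h z).mul (hG z hz).1

theorem pdy_evalSnd_mul (h : MvPolynomial (Fin q) ℝ) (hG : HasRadialDeriv G G') (j : Fin q) :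
    Set.EqOn (pdy p q j (evalSnd p h * G))
      (evalSnd p (MvPolynomial.pderiv j h) * G + evalSnd p (.X j * h) * G') {z | z.2 ≠ 0} :=
  fun z hz => by
    rw [pdy_mul (differentiable_evalSnd h z) (hG z hz).1, pdy_evalSnd, (hG z hz).2]
    simp only [evalSnd, Pi.add_apply, Pi.mul_apply, map_mul, MvPolynomial.eval_X]
    push_cast
    ring

theorem pdy_pdy_evalSnd_mul (h : MvPolynomial (Fin q) ℝ) {G'' : Pt p q → ℂ}
    (hG : HasRadialDeriv G G') (hG' : HasRadialDeriv G' G'') (j : Fin q)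
    {z : Pt p q} (hz : z.2 ≠ 0) :
    pdy p q j (pdy p q j (evalSnd p h * G)) z =
      evalSnd p (MvPolynomial.pderiv j (MvPolynomial.pderiv j h)) z * G z +
        (2 * evalSnd p (.X j * MvPolynomial.pderiv j h) z + evalSnd p h z) * G' z +
        (z.2 j : ℂ) ^ 2 * evalSnd p h z * G'' z := by
  rw [pdy_congr (pdy_evalSnd_mul h hG j) hz,
    pdy_add (differentiableAt_evalSnd_mul _ hG hz) (differentiableAt_evalSnd_mul _ hG' hz),
    pdy_evalSnd_mul _ hG j hz, pdy_evalSnd_mul _ hG' j hz]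
  simp only [evalSnd, Pi.add_apply, Pi.mul_apply, map_mul, map_add, MvPolynomial.pderiv_mul,
    MvPolynomial.pderiv_X_self, map_one, MvPolynomial.eval_X]
  push_cast
  ring

theorem XmOp_evalSnd_mul {l : ℕ} {h : MvPolynomial (Fin q) ℝ} (hhom : h.IsHomogeneous l)
    (hharm : ∑ j, MvPolynomial.pderiv j (MvPolynomial.pderiv j h) = 0)
    (hG : HasXmRadialPart (l + q / 2) G L) :
    Set.EqOn (XmOp p q (evalSnd p h * G)) (evalSnd p h * L) {z | z.2 ≠ 0} := fun z hz => by
  obtain ⟨G', G'', hG', hG'', hL⟩ := hG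
  have hlaplace : ∑ j, evalSnd p (MvPolynomial.pderiv j (MvPolynomial.pderiv j h)) z = 0 := by
    simpa [evalSnd] using congrArg (fun P => evalSnd p P z) hharm
  have heuler : ∑ j, evalSnd p (.X j * MvPolynomial.pderiv j h) z = l * evalSnd p h z := by
    simpa [evalSnd] using congrArg (fun P => evalSnd p P z) hhom.sum_X_mul_pderiv
  simp only [XmOp, pdy_pdy_evalSnd_mul h hG' hG'' _ hz, Finset.sum_add_distrib, ← Finset.sum_mul,
    ← Finset.mul_sum, hlaplace, heuler, Finset.sum_const, Finset.card_univ, Fintype.card_fin,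
    nsmul_eq_mul, Pi.mul_apply, hL z hz, rhox, rhoy]
  push_cast
  ring

end RadialPart

section PsiTerms

variable {p q : ℕ}

/-- The functions `φ(x) ρ_x^i ρ_y^s ψ_α` that occur in the iterates of `X⁻`, stripped of the
harmonic factor in `y`. -/
noncomputable def psiTerm (q : ℕ) (φ : (Fin p → ℝ) → ℂ) (i : ℕ) (s : ℤ) (α : ℂ) (z : Pt p q) : ℂ :=
  φ z.1 * (rhox p q z : ℂ) ^ i * (rhoy p q z : ℂ) ^ s * psiF p q α z

variable {φ : (Fin p → ℝ) → ℂ}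

theorem rhox_mul_psiTerm (i : ℕ) (s : ℤ) (α : ℂ) (z : Pt p q) :
    rhox p q z * psiTerm q φ i s α z = psiTerm q φ (i + 1) s α z := by
  simp only [psiTerm]
  ring

theorem rhoy_mul_psiTerm (i : ℕ) (s : ℤ) (α : ℂ) {z : Pt p q} (hz : z.2 ≠ 0) :
    rhoy p q z * psiTerm q φ i s α z = psiTerm q φ i (s + 1) α z := by
  simp only [psiTerm, zpow_add_one₀ (rhoy_ne_zero hz)]
  ring

theorem psiTerm_contiguous {α : ℂ} (hα : ∀ n : ℕ, α ≠ -n) (i : ℕ) (s : ℤ) {z : Pt p q}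
    (hz : z.2 ≠ 0) :
    psiTerm q φ i s α z = psiTerm q φ i s (α + 1) z -
      (α * (α + 1))⁻¹ * psiTerm q φ (i + 1) (s + 1) (α + 1 + 1) z := by
  simp only [psiTerm, psiF, Psi_contiguous hα, zpow_add_one₀ (rhoy_ne_zero hz)]
  push_cast
  ring

theorem hasRadialDeriv_psiTerm (hφ : Differentiable ℝ φ) (i : ℕ) (s : ℤ) (α : ℂ) :
    HasRadialDeriv (psiTerm q φ i s α)
      ((s : ℂ) • psiTerm q φ i (s - 1) α + (-α⁻¹) • psiTerm q φ (i + 1) s (α + 1)) := by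
  refine ((((HasRadialDeriv.comp_fst hφ).mul (hasRadialDeriv_rhox_pow i)).mul
    (hasRadialDeriv_rhoy_zpow s)).mul (hasRadialDeriv_psiF α)).congr_right fun z _ => ?_
  simp only [psiTerm, Pi.add_apply, Pi.mul_apply, Pi.smul_apply, Pi.zero_apply, smul_eq_mul]
  ring

theorem hasXmRadialPart_psiTerm (hφ : Differentiable ℝ φ) {α : ℂ} (hα : ∀ n : ℕ, α ≠ -n) (κ : ℂ)
    (i : ℕ) (s : ℤ) :
    HasXmRadialPart κ (psiTerm q φ i s α)
      ((s * (s - 1 + κ)) • psiTerm q φ i (s - 1) α +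
        ((α - 2 * s - κ) / α) • psiTerm q φ (i + 1) s (α + 1)) := by
  refine ⟨_, _, hasRadialDeriv_psiTerm hφ i s α,
    ((hasRadialDeriv_psiTerm hφ i (s - 1) α).const_smul _).add
      ((hasRadialDeriv_psiTerm hφ (i + 1) s (α + 1)).const_smul _), fun z hz => ?_⟩
  have hα₀ : α ≠ 0 := by simpa using hα 0
  simp only [Pi.add_apply, Pi.smul_apply, smul_eq_mul, mul_add, mul_left_comm (rhoy p q z : ℂ),
    rhox_mul_psiTerm, rhoy_mul_psiTerm _ _ _ hz, sub_add_cancel]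
  rw [psiTerm_contiguous hα (i + 1) s hz]
  push_cast
  field_simp
  ring

end PsiTerms

section Coefficients

/-- The coefficient of `ρ_x^i ρ_y^(m-ν+i) ψ_{α+i}` in the `ν`-th iterate, with `α`, `κ` and `m`
standing for `κ₊`, `κ₋` and `μ`. -/
noncomputable def xmCoeff (α κ lam m : ℂ) (ν i : ℕ) : ℂ :=
  (ν.choose i : ℂ) *
    (falling (-lam + ν - 1) i * falling m (ν - i) * falling (κ + m - 1) (ν - i) / rising α i)

variable (α κ lam m : ℂ) (ν : ℕ)

theorem xmCoeff_succ_self : xmCoeff α κ lam m ν (ν + 1) = 0 := by simp [xmCoeff]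

theorem xmCoeff_succ_zero :
    xmCoeff α κ lam m (ν + 1) 0 = xmCoeff α κ lam m ν 0 * ((m - ν) * (m - ν - 1 + κ)) := by
  simp only [xmCoeff, falling, rising, Nat.sub_zero, Nat.choose_zero_right]
  ring

theorem natCast_choose_succ_mul (n k : ℕ) :
    (n.choose (k + 1) : ℂ) * (k + 1) = n.choose k * ((n : ℂ) - k) := by
  obtain hlt | hle := lt_or_ge n k
  · simp [Nat.choose_eq_zero_of_lt hlt, Nat.choose_eq_zero_of_lt (hlt.trans k.lt_succ_self)]
  · rw [← Nat.cast_sub hle]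
    exact_mod_cast n.choose_succ_right_eq k

theorem xmCoeff_succ_succ {i : ℕ} (hi : i ≤ ν) :
    xmCoeff α κ lam m (ν + 1) (i + 1) =
      xmCoeff α κ lam m ν (i + 1) * ((m - ν + (i + 1)) * (m - ν + (i + 1) - 1 + κ)) +
        xmCoeff α κ lam m ν i * ((-lam + 2 * ν - i) / (α + i)) := by
  have hfalling : falling (-lam + ((ν + 1 : ℕ) : ℂ) - 1) (i + 1) =
      (-lam + ν) * falling (-lam + ν - 1) i := by
    rw [← falling_succ_left]
    push_cast
    ring_nf
  obtain rfl | hlt := hi.eq_or_lt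
  · rw [xmCoeff_succ_self]
    simp only [xmCoeff, hfalling, Nat.choose_self, Nat.sub_self]
    simp only [rising, falling, div_eq_mul_inv, mul_inv]
    ring
  · obtain ⟨n, rfl⟩ := Nat.exists_eq_add_of_lt hlt
    have hsub_succ : i + n + 1 - (i + 1) = n := by omega
    have hsub : i + n + 1 - i = n + 1 := by omega
    have hchoose := natCast_choose_succ_mul (i + n + 1) i
    simp only [xmCoeff, hfalling, Nat.add_sub_add_right, hsub_succ, hsub,
      Nat.choose_succ_succ' (i + n + 1) i]
    simp only [rising, falling, div_eq_mul_inv, mul_inv]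
    push_cast at hchoose ⊢
    linear_combination (falling (-lam + (i + n + 1) - 1) i * falling m n *
      falling (κ + m - 1) n * (m - n) * (κ + m - 1 - n) * (rising α i)⁻¹ * (α + i)⁻¹) * hchoose

theorem sum_xmCoeff_succ_smul {M : Type*} [AddCommGroup M] [Module ℂ M] (T : ℕ → M) :
    ∑ i ∈ Finset.range (ν + 1 + 1), xmCoeff α κ lam m (ν + 1) i • T i =
      ∑ i ∈ Finset.range (ν + 1), xmCoeff α κ lam m ν i •
        (((m - ν + i) * (m - ν + i - 1 + κ)) • T i +
          ((-lam + 2 * ν - i) / (α + i)) • T (i + 1)) := by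
  let a (i : ℕ) : M := (xmCoeff α κ lam m ν i * ((m - ν + i) * (m - ν + i - 1 + κ))) • T i
  let b (i : ℕ) : M := (xmCoeff α κ lam m ν i * ((-lam + 2 * ν - i) / (α + i))) • T (i + 1)
  have hzero : xmCoeff α κ lam m (ν + 1) 0 • T 0 = a 0 := by
    simp [a, xmCoeff_succ_zero]
  have hsucc (i : ℕ) (hi : i ∈ Finset.range (ν + 1)) :
      xmCoeff α κ lam m (ν + 1) (i + 1) • T (i + 1) = a (i + 1) + b i := by
    rw [xmCoeff_succ_succ α κ lam m ν (Finset.mem_range_succ_iff.1 hi), add_smul]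
    simp [a, b]
  have hlast : a (ν + 1) = 0 := by simp [a, xmCoeff_succ_self]
  calc ∑ i ∈ Finset.range (ν + 1 + 1), xmCoeff α κ lam m (ν + 1) i • T i
      = (∑ i ∈ Finset.range (ν + 1), a (i + 1) + a 0) + ∑ i ∈ Finset.range (ν + 1), b i := by
        rw [Finset.sum_range_succ', hzero, Finset.sum_congr rfl hsucc, Finset.sum_add_distrib,
          add_right_comm]
    _ = ∑ i ∈ Finset.range (ν + 1), (a i + b i) := by
        rw [← Finset.sum_range_succ', Finset.sum_range_succ a, hlast, add_zero,
          Finset.sum_add_distrib]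
    _ = _ := Finset.sum_congr rfl fun i _ => by simp only [a, b, smul_add, smul_smul]

end Coefficients

theorem hasXmRadialPart_sum_xmCoeff_smul_psiTerm {p q : ℕ} {φ : (Fin p → ℝ) → ℂ}
    (hφ : Differentiable ℝ φ) {α : ℂ} (hα : ∀ n : ℕ, α ≠ -n) (κ : ℂ) (μ : ℤ) {lam : ℂ}
    (hlam : lam = -α + κ + 2 * μ) (ν : ℕ) :
    HasXmRadialPart κ
      (∑ i ∈ Finset.range (ν + 1), xmCoeff α κ lam μ ν i • psiTerm q φ i (μ - ν + i) (α + i))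
      (∑ i ∈ Finset.range (ν + 1 + 1), xmCoeff α κ lam μ (ν + 1) i •
        psiTerm q φ i (μ - (ν + 1 : ℕ) + i) (α + i)) := by
  rw [sum_xmCoeff_succ_smul]
  refine .sum_const_smul _ _ fun i _ => ?_
  have hαi (n : ℕ) : α + i ≠ -n := fun h => hα (i + n) <| by
    push_cast
    linear_combination h
  convert hasXmRadialPart_psiTerm (q := q) hφ hαi κ i (μ - ν + i) using 3
  · push_cast
    ring
  · congr 1
    push_cast
    ring
  · rw [hlam]
    push_cast
    ring
  · congr 1 <;> push_cast <;> ring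

theorem iterate_XmOp_evalSnd_mul_psiTerm {p q l : ℕ} {φ : (Fin p → ℝ) → ℂ}
    (hφ : Differentiable ℝ φ) {h : MvPolynomial (Fin q) ℝ} (hhom : h.IsHomogeneous l)
    (hharm : ∑ j, MvPolynomial.pderiv j (MvPolynomial.pderiv j h) = 0)
    {α : ℂ} (hα : ∀ n : ℕ, α ≠ -n) (μ : ℤ) {lam : ℂ} (hlam : lam = -α + (l + q / 2) + 2 * μ)
    (ν : ℕ) :
    Set.EqOn ((XmOp p q)^[ν] (evalSnd p h * psiTerm q φ 0 μ α))
      (evalSnd p h * ∑ i ∈ Finset.range (ν + 1),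
        xmCoeff α (l + q / 2) lam μ ν i • psiTerm q φ i (μ - ν + i) (α + i))
      {z | z.2 ≠ 0} := by
  induction ν with
  | zero => simp [xmCoeff, falling, rising, Set.eqOn_refl]
  | succ ν ih =>
    rw [Function.iterate_succ_apply']
    exact (XmOp_congr ih).trans <| XmOp_evalSnd_mul hhom hharm <|
      hasXmRadialPart_sum_xmCoeff_smul_psiTerm hφ hα _ μ hlam ν

theorem stmt_17_general {p q l : ℕ} {φ : (Fin p → ℝ) → ℂ} (hφ : Differentiable ℝ φ)
    {h : MvPolynomial (Fin q) ℝ} (hhom : h.IsHomogeneous l)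
    (hharm : ∑ j, MvPolynomial.pderiv j (MvPolynomial.pderiv j h) = 0)
    {α κ : ℂ} (hα : ∀ n : ℕ, α ≠ -n) (hκ : κ = l + q / 2)
    (μ : ℤ) {lam : ℂ} (hlam : lam = -α + κ + 2 * μ) (ν : ℕ) {z : Pt p q} (hz : z.2 ≠ 0) :
    (XmOp p q)^[ν] (fun w => φ w.1 * (MvPolynomial.eval w.2 h : ℝ) * (rhoy p q w : ℂ) ^ μ *
        psiF p q α w) z =
      φ z.1 * (MvPolynomial.eval z.2 h : ℝ) * ∑ i ∈ Finset.range (ν + 1),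
        (ν.choose i : ℂ) *
          (falling (-lam + ν - 1) i * falling μ (ν - i) * falling (κ + μ - 1) (ν - i) /
            rising α i) *
          (rhox p q z : ℂ) ^ (i : ℤ) * (rhoy p q z : ℂ) ^ (μ - ν + i) * psiF p q (α + i) z := by
  subst hκ
  have hstart : (fun w : Pt p q => φ w.1 * (MvPolynomial.eval w.2 h : ℝ) *
      (rhoy p q w : ℂ) ^ μ * psiF p q α w) = evalSnd p h * psiTerm q φ 0 μ α := by
    ext w
    simp only [evalSnd, psiTerm, Pi.mul_apply]
    ring
  rw [hstart, iterate_XmOp_evalSnd_mul_psiTerm hφ hhom hharm hα μ hlam ν hz]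
  simp only [Pi.mul_apply, Finset.sum_apply, Pi.smul_apply, smul_eq_mul, Finset.mul_sum, evalSnd,
    psiTerm, xmCoeff, zpow_natCast]
  exact Finset.sum_congr rfl fun i _ => by ring

theorem stmt_17 (p q k l : ℕ) (hp : 1 ≤ p) (hq : 1 ≤ q)
    (h₁ : MvPolynomial (Fin p) ℝ) (h₂ : MvPolynomial (Fin q) ℝ)
    (hhom₁ : h₁.IsHomogeneous k) (hhom₂ : h₂.IsHomogeneous l)
    (hharm₁ : ∑ i : Fin p, MvPolynomial.pderiv i (MvPolynomial.pderiv i h₁) = 0)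
    (hharm₂ : ∑ j : Fin q, MvPolynomial.pderiv j (MvPolynomial.pderiv j h₂) = 0)
    (κp κm : ℂ) (hκp : κp = (k : ℂ) + (p : ℂ) / 2) (hκm : κm = (l : ℂ) + (q : ℂ) / 2)
    (μ : ℕ) (lam : ℂ) (hlam : lam = -κp + κm + 2 * (μ : ℂ))
    (E₁ E₂ : Pt p q → ℂ)
    (hE₁ : E₁ = fun z => ((MvPolynomial.eval z.1 h₁ : ℝ) : ℂ))
    (hE₂ : E₂ = fun z => ((MvPolynomial.eval z.2 h₂ : ℝ) : ℂ))
    (f : Pt p q → ℂ)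
    (hf : f = fun z => E₁ z * E₂ z * ((rhoy p q z : ℝ) : ℂ) ^ (μ : ℤ) * psiF p q κp z) :
    ∀ (ν : ℕ) (z : Pt p q), z.1 ≠ 0 → z.2 ≠ 0 →
      (XmOp p q)^[ν] f z =
        E₁ z * E₂ z * ∑ i ∈ Finset.range (ν + 1),
          (ν.choose i : ℂ) *
            (falling (-lam + (ν : ℂ) - 1) i * falling (μ : ℂ) (ν - i) *
                falling (κm + (μ : ℂ) - 1) (ν - i) / rising κp i) *
            ((rhox p q z : ℝ) : ℂ) ^ (i : ℤ) *
            ((rhoy p q z : ℝ) : ℂ) ^ ((μ : ℤ) - (ν : ℤ) + (i : ℤ)) *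
            psiF p q (κp + (i : ℂ)) z := by
  have hne (n : ℕ) : κp ≠ -n := fun h => by
    have hre : (k : ℝ) + p / 2 = -n := by simpa [hκp] using congrArg Complex.re h
    have hp' : (0 : ℝ) < p := by exact_mod_cast hp
    linarith [k.cast_nonneg (α := ℝ), n.cast_nonneg (α := ℝ)]
  intro ν z _ hz
  subst hE₁ hE₂ hf
  exact stmt_17_general (differentiable_ofReal_eval h₁) hhom₂ hharm₂ hne hκm μ
    (by exact_mod_cast hlam) ν hz
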